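/- Let λ = (1/(1 + √3))^{1/3}, let Q = diag(R_{π/3}, R_{π/6}, R_{π/2}, −1) and D(λ) = diag(I₄, λ I₂, λ³) be 7×7 matrices, let κ > 0, and define s_k = Q^k D(λ)^k 𝟙₇, g_k = −½ λ^{3k} Q^k D(λ)^{−k} 𝟙₇ and f_k = 7(κ + λ^{3k})/2. Then for all k ∈ ℕ: (i) s_kᵀ g_k = −7 λ^{3k}/2 < 0; (ii) f_{k+1} − f_k = (1 − λ³) s_kᵀ g_k, so the first Wolfe condition f_{k+1} ≤ f_k + σ s_kᵀ g_k holds with σ = 1 − λ³ and the Goldstein condition (1 − c) s_kᵀ g_k ≤ f_{k+1} − f_k ≤ c s_kᵀ g_k holds with c = λ³; (iii) s_kᵀ g_{k+1} = 0 (the exact line search condition). -/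

import Mathlib

/-! The matrix `Q` is orthogonal and `D(a) D(b) = D(ab)`, so `D(λ)^k = D(λ^k)`. Removing the common
factor `Q^k` from both sides of the dot products gives

* `s_k ⬝ g_k = -(λ^{3k}/2) 𝟙ᵀ 𝟙 = -7 λ^{3k}/2`;
* `s_k ⬝ g_{k+1} = -(λ^{3(k+1)}/2) 𝟙ᵀ D(λ^k) Q D(λ^{-(k+1)}) 𝟙`, where the quadratic form is
  `2 cos (π/3) + 2 cos (π/6) + 2 λ⁻¹ cos (π/2) - λ⁻³ = 1 + √3 - λ⁻³ = 0`.

The condition on `f_{k+1} - f_k` is then algebra, and the upper Goldstein inequality amounts to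
`λ³ ≤ 1/2`, which holds because `1 + √3 ≥ 2`. -/

open Matrix
open scoped Real

/-- `Q = diag(R_{π/3}, R_{π/6}, R_{π/2}, −1)`, a 7×7 orthogonal matrix. -/
noncomputable def Q7 : Matrix (Fin 7) (Fin 7) ℝ :=
  !![Real.cos (π / 3), -Real.sin (π / 3), 0, 0, 0, 0, 0;
     Real.sin (π / 3), Real.cos (π / 3), 0, 0, 0, 0, 0;
     0, 0, Real.cos (π / 6), -Real.sin (π / 6), 0, 0, 0;
     0, 0, Real.sin (π / 6), Real.cos (π / 6), 0, 0, 0;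
     0, 0, 0, 0, Real.cos (π / 2), -Real.sin (π / 2), 0;
     0, 0, 0, 0, Real.sin (π / 2), Real.cos (π / 2), 0;
     0, 0, 0, 0, 0, 0, -1]

/-- `D(λ) = diag(I₄, λ I₂, λ³)`. -/
noncomputable def D7 (l : ℝ) : Matrix (Fin 7) (Fin 7) ℝ :=
  Matrix.diagonal ![1, 1, 1, 1, l, l, l ^ 3]

/-- `λ = (1/(1 + √3))^{1/3}`. -/
noncomputable def lGN : ℝ := (1 / (1 + Real.sqrt 3)) ^ ((1 : ℝ) / 3)

/-- `s_k = Q^k D(λ)^k 𝟙₇`. -/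
noncomputable def sGN (k : ℕ) : Fin 7 → ℝ :=
  (Q7 ^ k * (D7 lGN) ^ k) *ᵥ fun _ => 1

/-- `g_k = −½ λ^{3k} Q^k D(λ)^{−k} 𝟙₇`. -/
noncomputable def gGN (k : ℕ) : Fin 7 → ℝ :=
  (-(lGN ^ (3 * k) / 2)) • ((Q7 ^ k * ((D7 lGN) ^ k)⁻¹) *ᵥ fun _ => 1)

/-- `f_k = 7(κ + λ^{3k})/2`. -/
noncomputable def fGN (κ : ℝ) (k : ℕ) : ℝ := 7 * (κ + lGN ^ (3 * k)) / 2

/-- `Q` is orthogonal: it preserves dot products. -/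
lemma Q7_mulVec_dotProduct (u v : Fin 7 → ℝ) : (Q7 *ᵥ u) ⬝ᵥ (Q7 *ᵥ v) = u ⬝ᵥ v := by
  have h3 := Real.sin_sq_add_cos_sq (π / 3)
  have h6 := Real.sin_sq_add_cos_sq (π / 6)
  have h2 := Real.sin_sq_add_cos_sq (π / 2)
  simp only [Q7, mulVec, dotProduct, Fin.sum_univ_seven, Matrix.of_apply, Matrix.cons_val]
  linear_combination (u 0 * v 0 + u 1 * v 1) * h3 + (u 2 * v 2 + u 3 * v 3) * h6 +
    (u 4 * v 4 + u 5 * v 5) * h2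

lemma Q7_pow_mulVec_dotProduct (k : ℕ) (u v : Fin 7 → ℝ) :
    (Q7 ^ k *ᵥ u) ⬝ᵥ (Q7 ^ k *ᵥ v) = u ⬝ᵥ v := by
  induction k with
  | zero => simp
  | succ k ih =>
    rw [pow_succ', ← mulVec_mulVec, ← mulVec_mulVec, Q7_mulVec_dotProduct, ih]

lemma D7_mul (a b : ℝ) : D7 a * D7 b = D7 (a * b) := by
  rw [D7, D7, D7, diagonal_mul_diagonal]
  congr 1
  ext i
  fin_cases i <;> simp [mul_pow]

lemma D7_one : D7 1 = 1 := by
  rw [D7, ← diagonal_one]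
  congr 1
  ext i
  fin_cases i <;> simp

lemma D7_pow (l : ℝ) (k : ℕ) : D7 l ^ k = D7 (l ^ k) := by
  induction k with
  | zero => simp [D7_one]
  | succ k ih => rw [pow_succ, ih, D7_mul, pow_succ]

lemma D7_inv {l : ℝ} (hl : l ≠ 0) : (D7 l)⁻¹ = D7 l⁻¹ :=
  Matrix.inv_eq_right_inv (by rw [D7_mul, mul_inv_cancel₀ hl, D7_one])

lemma D7_mulVec_one (a : ℝ) : (D7 a *ᵥ fun _ => 1) = ![1, 1, 1, 1, a, a, a ^ 3] := by
  ext i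
  simp [D7, mulVec_diagonal]

/-- The dot product behind `s_k ⬝ g_k`. -/
lemma D7_dotProduct (a b : ℝ) :
    (D7 a *ᵥ fun _ => 1) ⬝ᵥ (D7 b *ᵥ fun _ => 1) = 4 + 2 * (a * b) + (a * b) ^ 3 := by
  rw [D7_mulVec_one, D7_mulVec_one]
  simp only [dotProduct, Fin.sum_univ_seven, Matrix.cons_val]
  ring

/-- The dot product behind `s_k ⬝ g_{k+1}`: the sines cancel within each rotation block, and the
block `R_{π/2}` contributes nothing since `cos (π/2) = 0`. -/
lemma D7_dotProduct_Q7 (a b : ℝ) :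
    (D7 a *ᵥ fun _ => 1) ⬝ᵥ (Q7 *ᵥ (D7 b *ᵥ fun _ => 1)) = 1 + √3 - (a * b) ^ 3 := by
  rw [D7_mulVec_one, D7_mulVec_one]
  simp only [Q7, mulVec, dotProduct, Fin.sum_univ_seven, Matrix.of_apply, Matrix.cons_val,
    Real.cos_pi_div_three, Real.cos_pi_div_six, Real.cos_pi_div_two]
  ring

lemma lGN_pos : 0 < lGN := by
  unfold lGN
  positivity

lemma lGN_cube : lGN ^ 3 = 1 / (1 + √3) := by
  rw [lGN, ← Real.rpow_natCast, ← Real.rpow_mul (by positivity)]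
  norm_num

lemma lGN_cube_le_half : lGN ^ 3 ≤ 1 / 2 := by
  rw [lGN_cube]
  have h : 1 ≤ √3 := Real.one_le_sqrt.mpr (by norm_num)
  exact one_div_le_one_div_of_le (by norm_num) (by linarith)

lemma sGN_eq (k : ℕ) : sGN k = Q7 ^ k *ᵥ (D7 (lGN ^ k) *ᵥ fun _ => 1) := by
  rw [sGN, D7_pow, mulVec_mulVec]

lemma gGN_eq (k : ℕ) :
    gGN k = (-(lGN ^ (3 * k) / 2)) • (Q7 ^ k *ᵥ (D7 (lGN ^ k)⁻¹ *ᵥ fun _ => 1)) := by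
  rw [gGN, D7_pow, D7_inv (pow_ne_zero _ lGN_pos.ne'), mulVec_mulVec]

lemma sGN_dotProduct_gGN (k : ℕ) : sGN k ⬝ᵥ gGN k = -(7 * lGN ^ (3 * k)) / 2 := by
  rw [sGN_eq, gGN_eq, dotProduct_smul, Q7_pow_mulVec_dotProduct, D7_dotProduct,
    mul_inv_cancel₀ (pow_ne_zero _ lGN_pos.ne'), smul_eq_mul]
  ring

lemma sGN_dotProduct_gGN_succ (k : ℕ) : sGN k ⬝ᵥ gGN (k + 1) = 0 := by
  have hl := lGN_pos.ne'
  have h : lGN ^ k * (lGN ^ (k + 1))⁻¹ = lGN⁻¹ := by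
    field_simp
    rw [pow_succ]
  rw [sGN_eq, gGN_eq, dotProduct_smul, pow_succ Q7, ← mulVec_mulVec, Q7_pow_mulVec_dotProduct,
    D7_dotProduct_Q7, h, inv_pow, lGN_cube]
  simp

/-- the line search conditions for the Gauss–Newton example. -/
theorem gauss_newton_conditions_stmt11 (κ : ℝ) (hκ : 0 < κ) (k : ℕ) :
    -- (i)
    (sGN k ⬝ᵥ gGN k = -(7 * lGN ^ (3 * k)) / 2 ∧ sGN k ⬝ᵥ gGN k < 0) ∧
    -- (ii): first Wolfe (Armijo) with σ = 1 − λ³ and Goldstein with c = λ³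
    (fGN κ (k + 1) - fGN κ k = (1 - lGN ^ 3) * (sGN k ⬝ᵥ gGN k) ∧
      fGN κ (k + 1) ≤ fGN κ k + (1 - lGN ^ 3) * (sGN k ⬝ᵥ gGN k) ∧
      (1 - lGN ^ 3) * (sGN k ⬝ᵥ gGN k) ≤ fGN κ (k + 1) - fGN κ k ∧
      fGN κ (k + 1) - fGN κ k ≤ lGN ^ 3 * (sGN k ⬝ᵥ gGN k)) ∧
    -- (iii): exact line search
    sGN k ⬝ᵥ gGN (k + 1) = 0 := by
  have hsg := sGN_dotProduct_gGN k
  have hneg : sGN k ⬝ᵥ gGN k < 0 := by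
    have := pow_pos lGN_pos (3 * k)
    rw [hsg]
    linarith
  have hdiff : fGN κ (k + 1) - fGN κ k = (1 - lGN ^ 3) * (sGN k ⬝ᵥ gGN k) := by
    rw [hsg, fGN, fGN]
    ring
  refine ⟨⟨hsg, hneg⟩, ⟨hdiff, by linarith, hdiff.ge, ?_⟩, sGN_dotProduct_gGN_succ k⟩
  rw [hdiff]
  exact mul_le_mul_of_nonpos_right (by linarith [lGN_cube_le_half]) hneg.le
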